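/- arXiv:2205.10936 — 6 statements merged into one kernel-verified Lean document; each statement's English description precedes it below -/
import Mathlib

section
/- Let K be a positive integer, N ∈ ℝ^K with N_k ≥ 0 for all k, V = diag(N), θ ∈ ℝ^K, and j ≠ k two indices with θ_k ≥ θ_j and N_j + N_k > 0. Then inf { (θ−λ)ᵀ V (θ−λ) : λ ∈ ℝ^K, λ_j ≥ λ_k } = (N_j N_k / (N_j + N_k)) · (θ_k − θ_j)². Moreover, if θ_k < θ_j or N_j + N_k = 0, the infimum equals 0. -/
/-!
The quadratic form is `∑ i, N i * (θ i - lam i) ^ 2`, and the constraint involves only the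
coordinates `j` and `k`, so an optimal `lam` agrees with `θ` elsewhere. With `a = θ j - lam j` and
`b = θ k - lam k`, the two remaining terms satisfy
`(N j + N k) (N j a² + N k b²) = N j N k (b - a)² + (N j a + N k b)²`,
while the constraint says `b - a ≥ θ k - θ j`. This gives the lower bound, which is attained when
`lam j` and `lam k` both equal the weighted mean `(N j θ j + N k θ k) / (N j + N k)`.
In the degenerate cases the value `0` is attained, so in every case the infimum is a minimum.
-/

open Matrix

lemma quad_eq_sum {K : ℕ} (N v : Fin K → ℝ) :
    v ⬝ᵥ (Matrix.diagonal N).mulVec v = ∑ i, N i * v i ^ 2 := by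
  simp only [dotProduct, mulVec_diagonal]
  exact Finset.sum_congr rfl fun i _ => by ring

lemma pair_le_quad {K : ℕ} {N : Fin K → ℝ} (hN : ∀ i, 0 ≤ N i) (v : Fin K → ℝ)
    {j k : Fin K} (hjk : j ≠ k) :
    N j * v j ^ 2 + N k * v k ^ 2 ≤ v ⬝ᵥ (Matrix.diagonal N).mulVec v := by
  rw [quad_eq_sum, ← Finset.sum_pair (f := fun i => N i * v i ^ 2) hjk]
  exact Finset.sum_le_sum_of_subset_of_nonneg (Finset.subset_univ _)
    fun i _ _ => mul_nonneg (hN i) (sq_nonneg _)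

lemma quad_nonneg {K : ℕ} {N : Fin K → ℝ} (hN : ∀ i, 0 ≤ N i) (v : Fin K → ℝ) :
    0 ≤ v ⬝ᵥ (Matrix.diagonal N).mulVec v := by
  rw [quad_eq_sum]
  exact Finset.sum_nonneg fun i _ => mul_nonneg (hN i) (sq_nonneg _)

/-- The form evaluated at the point obtained from `θ` by moving coordinates `j` and `k` to a
common value `m`; such a point lies on the boundary of the half-space. -/
lemma quad_update {K : ℕ} (N θ : Fin K → ℝ) {j k : Fin K} (hjk : j ≠ k) (m : ℝ) :
    (θ - Function.update (Function.update θ j m) k m) ⬝ᵥ (Matrix.diagonal N).mulVec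
        (θ - Function.update (Function.update θ j m) k m)
      = N j * (θ j - m) ^ 2 + N k * (θ k - m) ^ 2 := by
  rw [quad_eq_sum, ← Finset.sum_subset (Finset.subset_univ {j, k}), Finset.sum_pair hjk]
  · simp [hjk]
  · intro i _ hi
    simp only [Finset.mem_insert, Finset.mem_singleton, not_or] at hi
    simp [hi.1, hi.2]

theorem inf_quadratic_over_halfspace_unstructured
    (K : ℕ) (hK : 0 < K) (N : Fin K → ℝ) (hN : ∀ k, 0 ≤ N k)
    (θ : Fin K → ℝ) (j k : Fin K) (hjk : j ≠ k) :
    (θ j ≤ θ k → 0 < N j + N k →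
      sInf ((fun lam => (θ - lam) ⬝ᵥ (Matrix.diagonal N).mulVec (θ - lam)) ''
          {lam : Fin K → ℝ | lam k ≤ lam j})
        = N j * N k / (N j + N k) * (θ k - θ j) ^ 2)
    ∧ ((θ k < θ j ∨ N j + N k = 0) →
      sInf ((fun lam => (θ - lam) ⬝ᵥ (Matrix.diagonal N).mulVec (θ - lam)) ''
          {lam : Fin K → ℝ | lam k ≤ lam j}) = 0) := by
  have hmem (m : ℝ) : Function.update (Function.update θ j m) k m ∈
      {lam : Fin K → ℝ | lam k ≤ lam j} := by
    simp [hjk]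
  refine ⟨fun hθ hpos => IsLeast.csInf_eq ⟨?_, ?_⟩, fun h => IsLeast.csInf_eq ⟨?_, ?_⟩⟩
  · refine ⟨_, hmem ((N j * θ j + N k * θ k) / (N j + N k)), ?_⟩
    simp only [quad_update N θ hjk]
    field_simp
    ring
  · rintro _ ⟨lam, hlam, rfl⟩
    refine le_trans ?_ (pair_le_quad hN (θ - lam) hjk)
    simp only [Pi.sub_apply, Set.mem_ofPred_eq] at hlam ⊢
    have hsq : (θ k - θ j) ^ 2 ≤ ((θ k - lam k) - (θ j - lam j)) ^ 2 :=
      pow_le_pow_left₀ (by linarith) (by linarith) 2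
    have hmul := mul_le_mul_of_nonneg_left hsq (mul_nonneg (hN j) (hN k))
    rw [div_mul_eq_mul_div, div_le_iff₀ hpos]
    nlinarith [sq_nonneg (N j * (θ j - lam j) + N k * (θ k - lam k))]
  · rcases h with h | h
    · exact ⟨θ, h.le, by simp⟩
    · have hj : N j = 0 := by linarith [hN j, hN k]
      have hk : N k = 0 := by linarith [hN j, hN k]
      refine ⟨_, hmem 0, ?_⟩
      simp only [quad_update N θ hjk, hj, hk, zero_mul, add_zero]
  · rintro _ ⟨lam, -, rfl⟩
    exact quad_nonneg hN _
end

section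
/- Let V ∈ ℝ^{d×d} be symmetric positive definite, θ ∈ ℝ^d, φ ∈ ℝ^d with φ ≠ 0, and define sign(x) = 1 if x ≥ 0 and 0 otherwise. For b ∈ {0,1}: if sign(θᵀφ) = b, then inf { (θ−λ)ᵀ V (θ−λ) : λ ∈ ℝ^d, sign(λᵀφ) ≠ b } = (θᵀφ)² / (φᵀ V^{-1} φ); and if sign(θᵀφ) ≠ b, the infimum equals 0. -/
/-!
Put `w = V⁻¹φ` and `c = φᵀV⁻¹φ > 0`, so that `Vw = φ`. Expanding the nonnegative number
`(x - s w)ᵀV(x - s w) = xᵀVx - 2s (xᵀφ) + s²c` at `s = xᵀφ / c` gives the Cauchy–Schwarz bound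
`(xᵀφ)² / c ≤ xᵀVx` (`sq_div_le_quadForm`), with equality for `x` on the line spanned by `w`
(`quadForm_smul`).

If `sign(θᵀφ) = b`, every admissible `λ` has `λᵀφ` on the other side of `0`, so
`((θ - λ)ᵀφ)² ≥ (θᵀφ)²` and the bound applies to `x = θ - λ`. Conversely `λ = θ - t w` has
`λᵀφ = θᵀφ - tc` and cost `t²c`. When `θᵀφ < 0` the choice `t = θᵀφ / c` attains the bound; when
`θᵀφ ≥ 0` the alternative is an open half-space and the bound is only approached, by
`t = (θᵀφ + η) / c` as `η ↓ 0`. If `sign(θᵀφ) ≠ b`, then `λ = θ` is itself admissible.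
-/

open Matrix

/-- `sign(x) = 1` if `x ≥ 0` and `0` otherwise. -/
noncomputable def signBit (x : ℝ) : ℕ := if 0 ≤ x then 1 else 0

private lemma mulVec_inv_mulVec {d : ℕ} {V : Matrix (Fin d) (Fin d) ℝ} (hV : V.PosDef)
    (φ : Fin d → ℝ) : V.mulVec (V⁻¹.mulVec φ) = φ := by
  have hdet : IsUnit V.det := hV.det_pos.ne'.isUnit
  rw [mulVec_mulVec, mul_nonsing_inv _ hdet, one_mulVec]

private lemma quadForm_nonneg {d : ℕ} {V : Matrix (Fin d) (Fin d) ℝ} (hV : V.PosDef)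
    (x : Fin d → ℝ) : 0 ≤ x ⬝ᵥ V.mulVec x := by
  simpa using hV.posSemidef.dotProduct_mulVec_nonneg x

private lemma inv_quadForm_pos {d : ℕ} {V : Matrix (Fin d) (Fin d) ℝ} (hV : V.PosDef)
    {φ : Fin d → ℝ} (hφ : φ ≠ 0) : 0 < φ ⬝ᵥ V⁻¹.mulVec φ := by
  simpa using hV.inv.dotProduct_mulVec_pos hφ

private lemma inv_mulVec_dotProduct_mulVec {d : ℕ} {V : Matrix (Fin d) (Fin d) ℝ}
    (hV : V.PosDef) (φ x : Fin d → ℝ) : V⁻¹.mulVec φ ⬝ᵥ V.mulVec x = x ⬝ᵥ φ := by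
  have hT : Vᵀ = V := by simpa using hV.isHermitian.eq
  rw [dotProduct_mulVec, ← mulVec_transpose, hT, mulVec_inv_mulVec hV, dotProduct_comm]

private lemma quadForm_smul {d : ℕ} {V : Matrix (Fin d) (Fin d) ℝ} (hV : V.PosDef)
    (φ : Fin d → ℝ) (t : ℝ) :
    (t • V⁻¹.mulVec φ) ⬝ᵥ V.mulVec (t • V⁻¹.mulVec φ) = t ^ 2 * (φ ⬝ᵥ V⁻¹.mulVec φ) := by
  rw [mulVec_smul, mulVec_inv_mulVec hV, smul_dotProduct, dotProduct_smul,
    dotProduct_comm _ φ, smul_eq_mul, smul_eq_mul]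
  ring

/-- The Cauchy–Schwarz inequality for the inner product defined by `V`, applied to `x` and
`V⁻¹φ`. -/
private lemma sq_div_le_quadForm {d : ℕ} {V : Matrix (Fin d) (Fin d) ℝ} (hV : V.PosDef)
    {φ : Fin d → ℝ} (hφ : φ ≠ 0) (x : Fin d → ℝ) :
    (x ⬝ᵥ φ) ^ 2 / (φ ⬝ᵥ V⁻¹.mulVec φ) ≤ x ⬝ᵥ V.mulVec x := by
  have hc := inv_quadForm_pos hV hφ
  have hexp : ∀ s : ℝ, (x - s • V⁻¹.mulVec φ) ⬝ᵥ V.mulVec (x - s • V⁻¹.mulVec φ)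
      = x ⬝ᵥ V.mulVec x - 2 * s * (x ⬝ᵥ φ) + s ^ 2 * (φ ⬝ᵥ V⁻¹.mulVec φ) := by
    intro s
    rw [mulVec_sub, sub_dotProduct, dotProduct_sub, dotProduct_sub, quadForm_smul hV,
      mulVec_smul, mulVec_inv_mulVec hV, smul_dotProduct, dotProduct_smul,
      inv_mulVec_dotProduct_mulVec hV, smul_eq_mul]
    ring
  have h := quadForm_nonneg hV
    (x - ((x ⬝ᵥ φ) / (φ ⬝ᵥ V⁻¹.mulVec φ)) • V⁻¹.mulVec φ)
  rw [hexp] at h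
  have e : x ⬝ᵥ V.mulVec x - 2 * ((x ⬝ᵥ φ) / (φ ⬝ᵥ V⁻¹.mulVec φ)) * (x ⬝ᵥ φ)
      + ((x ⬝ᵥ φ) / (φ ⬝ᵥ V⁻¹.mulVec φ)) ^ 2 * (φ ⬝ᵥ V⁻¹.mulVec φ)
      = x ⬝ᵥ V.mulVec x - (x ⬝ᵥ φ) ^ 2 / (φ ⬝ᵥ V⁻¹.mulVec φ) := by
    field_simp
    ring
  linarith

/-- If `λᵀφ` and `θᵀφ` have different signs, then `(λᵀφ - θᵀφ)²` is at least `(θᵀφ)²`. -/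
private lemma sq_le_sq_sub_of_signBit_ne {a l : ℝ} (h : signBit l ≠ signBit a) :
    a ^ 2 ≤ (a - l) ^ 2 := by
  unfold signBit at h
  split_ifs at h with hl ha ha
  · exact absurd rfl h
  · nlinarith
  · nlinarith
  · exact absurd rfl h

/-- Closed form for the infimum of the quadratic form `(θ−λ)ᵀV(θ−λ)` over the set of
parameters whose sign for feature `φ` differs from `b`, for `V` symmetric positive
definite: it equals `(θᵀφ)²/(φᵀV⁻¹φ)` when `sign(θᵀφ) = b` and `0` otherwise. -/
theorem inf_quadratic_over_sign_alternative
    (d : ℕ) (V : Matrix (Fin d) (Fin d) ℝ) (hV : V.PosDef)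
    (θ φ : Fin d → ℝ) (hφ : φ ≠ 0) (b : ℕ) (hb : b = 0 ∨ b = 1) :
    (signBit (θ ⬝ᵥ φ) = b →
      sInf ((fun lam => (θ - lam) ⬝ᵥ V.mulVec (θ - lam)) ''
          {lam : Fin d → ℝ | signBit (lam ⬝ᵥ φ) ≠ b})
        = (θ ⬝ᵥ φ) ^ 2 / (φ ⬝ᵥ V⁻¹.mulVec φ))
    ∧ (signBit (θ ⬝ᵥ φ) ≠ b →
      sInf ((fun lam => (θ - lam) ⬝ᵥ V.mulVec (θ - lam)) ''
          {lam : Fin d → ℝ | signBit (lam ⬝ᵥ φ) ≠ b}) = 0) := by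
  have hc := inv_quadForm_pos hV hφ
  have hbdd : BddBelow ((fun lam => (θ - lam) ⬝ᵥ V.mulVec (θ - lam)) ''
      {lam : Fin d → ℝ | signBit (lam ⬝ᵥ φ) ≠ b}) := by
    refine ⟨0, ?_⟩
    rintro _ ⟨lam, -, rfl⟩
    exact quadForm_nonneg hV _
  constructor
  · intro hθ
    -- `λ = θ - ((θᵀφ + η)/c) V⁻¹φ` satisfies `λᵀφ = -η` and has cost `(θᵀφ + η)²/c`.
    have hmem : ∀ η : ℝ, signBit (-η) ≠ b →
        (θ ⬝ᵥ φ + η) ^ 2 / (φ ⬝ᵥ V⁻¹.mulVec φ) ∈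
          (fun lam => (θ - lam) ⬝ᵥ V.mulVec (θ - lam)) ''
            {lam : Fin d → ℝ | signBit (lam ⬝ᵥ φ) ≠ b} := by
      intro η hη
      refine ⟨θ - ((θ ⬝ᵥ φ + η) / (φ ⬝ᵥ V⁻¹.mulVec φ)) • V⁻¹.mulVec φ, ?_, ?_⟩
      · have : (θ - ((θ ⬝ᵥ φ + η) / (φ ⬝ᵥ V⁻¹.mulVec φ)) • V⁻¹.mulVec φ) ⬝ᵥ φ = -η := by
          rw [sub_dotProduct, smul_dotProduct, dotProduct_comm _ φ, smul_eq_mul,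
            dotProduct_comm (V⁻¹.mulVec φ) φ, div_mul_cancel₀ _ hc.ne', dotProduct_comm φ θ]
          ring
        rw [Set.mem_ofPred_eq, this]
        exact hη
      · simp only [sub_sub_cancel]
        rw [quadForm_smul hV]
        field_simp
    have hne : ((fun lam => (θ - lam) ⬝ᵥ V.mulVec (θ - lam)) ''
        {lam : Fin d → ℝ | signBit (lam ⬝ᵥ φ) ≠ b}).Nonempty := by
      rcases hb with rfl | rfl
      · exact ⟨_, hmem 0 (by simp [signBit])⟩
      · exact ⟨_, hmem 1 (by norm_num [signBit])⟩
    apply le_antisymm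
    · rcases hb with rfl | rfl
      · simpa using csInf_le hbdd (hmem 0 (by simp [signBit]))
      · have hlim : Filter.Tendsto
            (fun η : ℝ => (θ ⬝ᵥ φ + η) ^ 2 / (φ ⬝ᵥ V⁻¹.mulVec φ))
            (nhdsWithin 0 (Set.Ioi 0)) (nhds ((θ ⬝ᵥ φ) ^ 2 / (φ ⬝ᵥ V⁻¹.mulVec φ))) := by
          have hcont : Continuous
              (fun η : ℝ => (θ ⬝ᵥ φ + η) ^ 2 / (φ ⬝ᵥ V⁻¹.mulVec φ)) := by fun_prop
          have h0 := hcont.tendsto 0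
          rw [add_zero] at h0
          exact h0.mono_left nhdsWithin_le_nhds
        refine ge_of_tendsto hlim ?_
        filter_upwards [self_mem_nhdsWithin] with η hη
        have hη' : ¬ (0 ≤ -η) := by
          have : 0 < η := hη
          linarith
        exact csInf_le hbdd (hmem η (by simp only [signBit, if_neg hη']; decide))
    · refine le_csInf hne ?_
      rintro _ ⟨lam, hlam, rfl⟩
      refine le_trans ?_ (sq_div_le_quadForm hV hφ (θ - lam))
      rw [sub_dotProduct]
      gcongr ?_ / _
      exact sq_le_sq_sub_of_signBit_ne (by rw [hθ]; exact hlam)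
  · intro hθ
    have h0 : (0 : ℝ) ∈ (fun lam => (θ - lam) ⬝ᵥ V.mulVec (θ - lam)) ''
        {lam : Fin d → ℝ | signBit (lam ⬝ᵥ φ) ≠ b} := ⟨θ, hθ, by simp⟩
    apply le_antisymm (csInf_le hbdd h0)
    refine le_csInf ⟨0, h0⟩ ?_
    rintro _ ⟨lam, -, rfl⟩
    exact quadForm_nonneg hV _
end

section
/- Let I be a finite set of answers, for each i ∈ I a finite index set P(i), and for each time t ≥ 1 let ι_t ∈ I (the empirical answer), β_t ∈ ℝ (a threshold), and ℓ_t(i,p) ∈ ℝ (the infimum log-likelihood-ratio value of piece p of answer i). Define the selective-elimination active sets by P^s_0(i) = P(i) and, for t ≥ 1, P^s_t(ι_t) = P^s_{t−1}(ι_t) ∩ { p : ℓ_t(ι_t,p) < β_t } while P^s_t(i) = P^s_{t−1}(i) for i ≠ ι_t; define the full-elimination active sets by P^f_0(i) = P(i) and P^f_t(i) = P^f_{t−1}(i) ∩ { p : ℓ_t(i,p) < β_t } for every i. Let τ_s = inf{ t ≥ 1 : P^s_t(ι_t) = ∅ }, τ_f = inf{ t ≥ 1 : ∃ i ∈ I,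 P^f_t(i) = ∅ }, and τ_llr = inf{ t ≥ 1 : ∀ p ∈ P(ι_t), ℓ_t(ι_t,p) ≥ β_t } (each an extended natural number equal to ∞ if the set is empty). Then τ_f ≤ τ_s ≤ τ_llr. -/
open BigOperators

/-!
Pieces are only ever removed, and full elimination removes at each round at least what selective
elimination removes, so `Pf t i ⊆ Ps t i ⊆ P i` for all `t` and `i`, by induction on `t`.
If `Ps t (ι t)` is empty, so is `Pf t (ι t)`, and full elimination has stopped. If every piece of
`P (ι t)` is above the threshold at time `t ≥ 1`, then a piece in `Ps t (ι t)` would lie in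
`P (ι t)` and be below the threshold, a contradiction, so selective elimination has stopped.
Each stopping set thus contains the next one, and `sInf` is antitone.
-/

/-- Ordering of the stopping times of full elimination, selective elimination, and LLR
stopping: for any sequences of empirical answers `ι`, thresholds `β`, and infimum-LLR
values `ℓ`, one has `τ_full ≤ τ_selective ≤ τ_llr` (as extended naturals). -/
theorem elimination_stopping_times_ordered
    {I ρ : Type*} (P : I → Finset ρ) (ι : ℕ → I) (β : ℕ → ℝ) (ℓ : ℕ → I → ρ → ℝ)
    (Ps Pf : ℕ → I → Finset ρ)
    (hPs0 : ∀ i, Ps 0 i = P i)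
    (hPsRec : ∀ t : ℕ, ∀ p : ρ,
      p ∈ Ps (t + 1) (ι (t + 1)) ↔ p ∈ Ps t (ι (t + 1)) ∧ ℓ (t + 1) (ι (t + 1)) p < β (t + 1))
    (hPsOther : ∀ t : ℕ, ∀ i : I, i ≠ ι (t + 1) → Ps (t + 1) i = Ps t i)
    (hPf0 : ∀ i, Pf 0 i = P i)
    (hPfRec : ∀ t : ℕ, ∀ i : I, ∀ p : ρ,
      p ∈ Pf (t + 1) i ↔ p ∈ Pf t i ∧ ℓ (t + 1) i p < β (t + 1)) :
    sInf {n : ℕ∞ | ∃ t : ℕ, n = (t : ℕ∞) ∧ 1 ≤ t ∧ ∃ i : I, Pf t i = ∅}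
      ≤ sInf {n : ℕ∞ | ∃ t : ℕ, n = (t : ℕ∞) ∧ 1 ≤ t ∧ Ps t (ι t) = ∅}
    ∧ sInf {n : ℕ∞ | ∃ t : ℕ, n = (t : ℕ∞) ∧ 1 ≤ t ∧ Ps t (ι t) = ∅}
      ≤ sInf {n : ℕ∞ | ∃ t : ℕ, n = (t : ℕ∞) ∧ 1 ≤ t ∧ ∀ p ∈ P (ι t), β t ≤ ℓ t (ι t) p} := by
  have hsub : ∀ t i, Pf t i ⊆ Ps t i ∧ Ps t i ⊆ P i := by
    intro t
    induction t with
    | zero => intro i; simp [hPs0, hPf0]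
    | succ t ih =>
      intro i
      by_cases hi : i = ι (t + 1)
      · subst hi
        refine ⟨fun p hp => ?_, fun p hp => (ih _).2 ((hPsRec t p).1 hp).1⟩
        obtain ⟨h1, h2⟩ := (hPfRec t _ p).1 hp
        exact (hPsRec t p).2 ⟨(ih _).1 h1, h2⟩
      · rw [hPsOther t i hi]
        exact ⟨fun p hp => (ih i).1 ((hPfRec t i p).1 hp).1, (ih i).2⟩
  constructor
  · apply sInf_le_sInf
    rintro n ⟨t, hn, ht, hempty⟩
    exact ⟨t, hn, ht, ι t, Finset.subset_empty.1 (hempty ▸ (hsub t (ι t)).1)⟩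
  · apply sInf_le_sInf
    rintro n ⟨t, hn, ht, hall⟩
    refine ⟨t, hn, ht, Finset.eq_empty_of_forall_notMem fun p hp => ?_⟩
    have hle := hall p ((hsub t (ι t)).2 hp)
    obtain ⟨s, rfl⟩ := Nat.exists_eq_add_of_le' ht
    exact absurd ((hPsRec s p).1 hp).2 (not_lt.2 hle)
end

section
/- Fix an integer K ≥ 3 and ε ∈ (0,1/2). In ℝ², let φ_1 = (1,0)ᵀ, φ_2 = (0,1)ᵀ, and for each k = 3,…,K let φ_k = (a_k, b_k)ᵀ with a_k, b_k ∈ (−1,0) and a_k² + b_k² = 1. Let θ = (1, 1−ε)ᵀ. For ω in the simplex Δ_K = {ω ∈ ℝ^K : ω_k ≥ 0, Σ_k ω_k = 1}, let V_ω = Σ_{k=1}^K ω_k φ_k φ_kᵀ and, for k = 2,…,K, H_k(ω,θ) = inf{ ½ (θ−λ)ᵀ V_ω (θ−λ) : λ ∈ ℝ², λᵀφ_k ≥ λᵀφ_1 }. Then for every ω ∈ Δ_K and every k ∈ {3,…,K}: H_k(ω,θ) ≥ ((1−ε)²/ε²) · H_2(ω,θ). -/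
/-!
The cost of `lam` is `½ ∑ k, ω k * (φ k ⬝ᵥ (θ - lam))²`, and every feature vector has
coordinates `a`, `b` with `0 ≤ a * b`. Let `lam` be feasible for an arm `k ≥ 3` and write
`(u, v) = θ - lam`. Feasibility forces `u ≥ 1` or `v ≥ 1 - ε`. Hence, after flipping signs, or
deleting one coordinate when `u, v ≥ 0`, one gets `w` with `w₀ - w₁ ≥ 1 - ε` such that
`(a w₀ + b w₁)² ≤ (a u + b v)²` whenever `0 ≤ a * b` (`exists_cheaper_direction`).
The point `θ - (ε / (1 - ε)) w` is then feasible for arm 2, and its cost is at most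
`ε² / (1 - ε)²` times the cost of `lam`. Taking infima gives the claim.
-/


open Matrix BigOperators

/-- Design matrix `V_ω = Σ_k ω_k φ_k φ_kᵀ` for allocation `ω`. -/
noncomputable def designMatrix {K : ℕ} (φ : Fin K → Fin 2 → ℝ) (ω : Fin K → ℝ) :
    Matrix (Fin 2) (Fin 2) ℝ :=
  ∑ k : Fin K, ω k • Matrix.vecMulVec (φ k) (φ k)

/-- `H_k(ω,θ) = inf { ½(θ−λ)ᵀV_ω(θ−λ) : λᵀφ_k ≥ λᵀφ_i }`, the information that the
allocation `ω` brings to discriminate `θ` from the alternative half-space piece of arm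
`k` (with `i` the candidate best arm). -/
noncomputable def Hinfo {K : ℕ} (φ : Fin K → Fin 2 → ℝ) (θ : Fin 2 → ℝ)
    (ω : Fin K → ℝ) (k i : Fin K) : ℝ :=
  sInf ((fun lam => (1 / 2 : ℝ) * ((θ - lam) ⬝ᵥ (designMatrix φ ω).mulVec (θ - lam))) ''
    {lam : Fin 2 → ℝ | lam ⬝ᵥ φ i ≤ lam ⬝ᵥ φ k})

lemma designMatrix_quadForm {K : ℕ} (φ : Fin K → Fin 2 → ℝ) (ω : Fin K → ℝ) (d : Fin 2 → ℝ) :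
    d ⬝ᵥ (designMatrix φ ω).mulVec d = ∑ k, ω k * (φ k 0 * d 0 + φ k 1 * d 1) ^ 2 := by
  rw [designMatrix, Matrix.sum_mulVec, dotProduct_sum]
  refine Finset.sum_congr rfl fun k _ => ?_
  simp [Matrix.mulVec, dotProduct, Fin.sum_univ_two, Matrix.vecMulVec_apply]
  ring

/-- A displacement `(u, v)` that reaches the piece of a far arm with features `(a, b)` dominates,
for every feature in the closed first or third quadrant, a displacement that closes a gap of
`1 - ε` between arms 1 and 2. -/
lemma exists_cheaper_direction {ε a b u v : ℝ} (hε : ε < 1 / 2) (hε0 : 0 < ε)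
    (ha : a < 0) (hb : b < 0) (h : 1 - u ≤ (1 - u) * a + (1 - ε - v) * b) :
    ∃ w₀ w₁ : ℝ, 1 - ε ≤ w₀ - w₁ ∧
      ∀ x y : ℝ, 0 ≤ x * y → (x * w₀ + y * w₁) ^ 2 ≤ (x * u + y * v) ^ 2 := by
  have key : 1 ≤ u ∨ 1 - ε ≤ v := by
    by_contra! hc
    nlinarith [mul_pos (sub_pos.2 hc.1) (neg_pos.2 ha), mul_pos (sub_pos.2 hc.2) (neg_pos.2 hb)]
  rcases lt_or_ge u 0 with hu | hu
  · exact ⟨-u, -v, by rcases key with h1 | h1 <;> linarith, fun x y _ => le_of_eq (by ring)⟩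
  rcases lt_or_ge v 0 with hv | hv
  · exact ⟨u, v, by rcases key with h1 | h1 <;> linarith, fun x y _ => le_rfl⟩
  rcases key with h1 | h1
  · refine ⟨u, 0, by linarith, fun x y hxy => ?_⟩
    nlinarith [mul_nonneg hxy (mul_nonneg hu hv), sq_nonneg (y * v)]
  · refine ⟨0, -v, by linarith, fun x y hxy => ?_⟩
    nlinarith [mul_nonneg hxy (mul_nonneg hu hv), sq_nonneg (x * u)]

/-- On the example best-arm identification instance (arm 1 optimal, arm 2 at gap ε, all
other arms with unit-norm features in the negative quadrant), for every allocation `ω`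
in the simplex and every arm `k ≥ 3`, `H_k(ω,θ) ≥ ((1−ε)²/ε²)·H_2(ω,θ)`.
(Arms are 0-indexed: arm 1 ↦ index 0, arm 2 ↦ index 1, arms 3,…,K ↦ indices 2,…,K−1.) -/
theorem example_instance_far_pieces
    (K : ℕ) (hK : 3 ≤ K) (ε : ℝ) (hε0 : 0 < ε) (hε : ε < 1 / 2)
    (φ : Fin K → Fin 2 → ℝ)
    (hφ0 : φ ⟨0, by omega⟩ = ![1, 0])
    (hφ1 : φ ⟨1, by omega⟩ = ![0, 1])
    (hφk : ∀ k : Fin K, 2 ≤ (k : ℕ) →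
      φ k 0 ∈ Set.Ioo (-1 : ℝ) 0 ∧ φ k 1 ∈ Set.Ioo (-1 : ℝ) 0 ∧
        (φ k 0) ^ 2 + (φ k 1) ^ 2 = 1)
    (θ : Fin 2 → ℝ) (hθ : θ = ![1, 1 - ε])
    (ω : Fin K → ℝ) (hω0 : ∀ k, 0 ≤ ω k) (hω1 : ∑ k : Fin K, ω k = 1)
    (k : Fin K) (hk : 2 ≤ (k : ℕ)) :
    Hinfo φ θ ω k ⟨0, by omega⟩
      ≥ (1 - ε) ^ 2 / ε ^ 2 * Hinfo φ θ ω ⟨1, by omega⟩ ⟨0, by omega⟩ := by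
  have hφ : ∀ j, 0 ≤ φ j 0 * φ j 1 := by
    intro j
    by_cases hj : 2 ≤ (j : ℕ)
    · exact (mul_pos_of_neg_of_neg (hφk j hj).1.2 (hφk j hj).2.1.2).le
    · have : j = ⟨0, by omega⟩ ∨ j = ⟨1, by omega⟩ := by
        simp only [Fin.ext_iff]
        omega
      rcases this with h | h
      · simp [h, hφ0]
      · simp [h, hφ1]
  have hε1 : 0 < 1 - ε := by linarith
  obtain ⟨⟨-, ha⟩, ⟨-, hb⟩, -⟩ := hφk k hk
  simp only [Hinfo, designMatrix_quadForm, ge_iff_le]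
  -- The origin lies in every half-space, so the infimum is over a nonempty set.
  refine le_csInf (Set.Nonempty.image _ ⟨0, by simp⟩) ?_
  rintro _ ⟨lam, hlam, rfl⟩
  simp only [Set.mem_setOf_eq, hφ0, dotProduct, Fin.sum_univ_two] at hlam
  obtain ⟨w₀, w₁, hw, hcost⟩ := exists_cheaper_direction (u := 1 - lam 0) (v := 1 - ε - lam 1)
    hε hε0 ha hb (by simpa using hlam)
  have hbdd : BddBelow ((fun lam : Fin 2 → ℝ => (1 / 2 : ℝ) *
      ∑ j, ω j * (φ j 0 * (θ - lam) 0 + φ j 1 * (θ - lam) 1) ^ 2) ''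
      {lam | lam ⬝ᵥ φ ⟨0, by omega⟩ ≤ lam ⬝ᵥ φ ⟨1, by omega⟩}) := by
    refine ⟨0, ?_⟩
    rintro _ ⟨l, -, rfl⟩
    exact mul_nonneg (by norm_num)
      (Finset.sum_nonneg fun j _ => mul_nonneg (hω0 j) (sq_nonneg _))
  have hgap : ε ≤ ε / (1 - ε) * w₀ - ε / (1 - ε) * w₁ := by
    rw [← mul_sub, div_mul_eq_mul_div, le_div_iff₀ hε1]
    exact mul_le_mul_of_nonneg_left hw hε0.le
  have hle := csInf_le hbdd (Set.mem_image_of_mem _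
    (show ![1 - ε / (1 - ε) * w₀, 1 - ε - ε / (1 - ε) * w₁] ∈ _ by
      simp only [Set.mem_setOf_eq, hφ0, hφ1, dotProduct, Fin.sum_univ_two]
      simp
      linarith))
  refine (mul_le_mul_of_nonneg_left hle (by positivity)).trans ?_
  rw [mul_left_comm, Finset.mul_sum]
  refine mul_le_mul_of_nonneg_left (Finset.sum_le_sum fun j _ => ?_) (by norm_num)
  have h1 := mul_le_mul_of_nonneg_left (hcost _ _ (hφ j)) (hω0 j)
  subst hθ
  simp only [Pi.sub_apply, Matrix.cons_val_zero, Matrix.cons_val_one]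
  refine le_trans (le_of_eq ?_) h1
  have := hε1.ne'
  field_simp
  ring
end

section
/- Fix an integer K ≥ 3 and ε ∈ (0,1/2). In ℝ², let φ_1 = (1,0)ᵀ, φ_2 = (0,1)ᵀ, and for each k = 3,…,K let φ_k = (a_k, b_k)ᵀ with a_k, b_k ∈ (−1,0) and a_k² + b_k² = 1. Let θ = (1, 1−ε)ᵀ. For ω in the simplex Δ_K = {ω ∈ ℝ^K : ω_k ≥ 0, Σ_k ω_k = 1}, let V_ω = Σ_{k=1}^K ω_k φ_k φ_kᵀ and, for k = 2,…,K, H_k(ω,θ) = inf{ ½ (θ−λ)ᵀ V_ω (θ−λ) : λ ∈ ℝ², λᵀφ_k ≥ λᵀφ_1 }. Let ω* = (1/2, 1/2, 0, …, 0)ᵀ ∈ Δ_K. Then min_{k∈{2,…,K}} H_k(ω*,θ) = ε²/8, and for every ω ∈ Δ_K, min_{k∈{2,…,K}} H_k(ω,θ) ≤ ε²/8; in particular max_{ω∈Δ_K} min_{k∈{2,…,K}} H_k(ω,θ) = ε²/8 and is attained at ω*. -/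
/-!
The information is a weighted sum of squares: with `x = θ - λ`,
`xᵀ V_ω x = ∑ k, ω k * (φ k ⬝ᵥ x)²` (`quadForm_eq`).

Upper bound: whatever the allocation, arm 2 is hard to discriminate from arm 1. The point
`λ = (1 - ε/2, 1 - ε/2)` lies on the boundary of the half-space of arm 2, and `θ - λ` equals
`(ε/2)(1, -1)`. Each `(φ k ⬝ᵥ (1, -1))²` is at most `1`: the first two arms give exactly `1`, and for
the others both coordinates lie in `(-1, 0)`, so their difference lies in `(-1, 1)`.
Averaging over `ω` gives at most `½ (ε/2)² = ε²/8`.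

Lower bound: at `ω*` the form is half the squared Euclidean norm, so `H_k` is a quarter of the squared
Euclidean distance from `θ` to the half-space. This distance is `ε/√2` for arm 2. For an arm
`(a, b)` with negative coordinates, Cauchy–Schwarz against the normal `(1 - a, -b)`, of squared norm
`2 (1 - a)`, shows that the squared distance is at least `(1 - a)/2 ≥ 1/2`, larger than `ε²/2`.
-/

open Matrix BigOperators

theorem quadForm_eq {K : ℕ} (φ : Fin K → Fin 2 → ℝ) (ω : Fin K → ℝ) (x : Fin 2 → ℝ) :
    x ⬝ᵥ (designMatrix φ ω).mulVec x = ∑ k, ω k * (φ k ⬝ᵥ x) ^ 2 := by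
  rw [designMatrix, Matrix.sum_mulVec, dotProduct_sum]
  refine Finset.sum_congr rfl fun k _ => ?_
  simp [Matrix.mulVec, dotProduct, Matrix.vecMulVec, Fin.sum_univ_two]
  ring

theorem quadForm_nonneg_s12 {K : ℕ} (φ : Fin K → Fin 2 → ℝ) {ω : Fin K → ℝ} (hω : ∀ k, 0 ≤ ω k)
    (x : Fin 2 → ℝ) : 0 ≤ (1 / 2 : ℝ) * (x ⬝ᵥ (designMatrix φ ω).mulVec x) := by
  rw [quadForm_eq]
  exact mul_nonneg (by norm_num)
    (Finset.sum_nonneg fun k _ => mul_nonneg (hω k) (sq_nonneg _))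

theorem Hinfo_nonneg {K : ℕ} (φ : Fin K → Fin 2 → ℝ) (θ : Fin 2 → ℝ) {ω : Fin K → ℝ}
    (hω : ∀ k, 0 ≤ ω k) (k i : Fin K) : 0 ≤ Hinfo φ θ ω k i := by
  apply Real.sInf_nonneg
  rintro _ ⟨l, -, rfl⟩
  exact quadForm_nonneg_s12 φ hω _

/-- Any point of the half-space bounds `Hinfo` from above; nonnegative weights keep the infimum
from being a junk value. -/
theorem Hinfo_le {K : ℕ} (φ : Fin K → Fin 2 → ℝ) (θ : Fin 2 → ℝ) {ω : Fin K → ℝ}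
    (hω : ∀ k, 0 ≤ ω k) (k i : Fin K) (l : Fin 2 → ℝ) (hl : l ⬝ᵥ φ i ≤ l ⬝ᵥ φ k) :
    Hinfo φ θ ω k i ≤ (1 / 2 : ℝ) * ((θ - l) ⬝ᵥ (designMatrix φ ω).mulVec (θ - l)) := by
  refine csInf_le ⟨0, ?_⟩ ⟨l, hl, rfl⟩
  rintro _ ⟨l, -, rfl⟩
  exact quadForm_nonneg_s12 φ hω _

theorem le_Hinfo {K : ℕ} (φ : Fin K → Fin 2 → ℝ) (θ : Fin 2 → ℝ) (ω : Fin K → ℝ)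
    (k i : Fin K) (c : ℝ) (h : ∀ l : Fin 2 → ℝ, l ⬝ᵥ φ i ≤ l ⬝ᵥ φ k →
      c ≤ (1 / 2 : ℝ) * ((θ - l) ⬝ᵥ (designMatrix φ ω).mulVec (θ - l))) :
    c ≤ Hinfo φ θ ω k i := by
  refine le_csInf ⟨_, 0, by simp, rfl⟩ ?_
  rintro _ ⟨l, hl, rfl⟩
  exact h l hl

theorem sum_half_mul (K : ℕ) (hK : 2 ≤ K) (f : Fin K → ℝ) :
    ∑ k : Fin K, (if (k : ℕ) ≤ 1 then (1 / 2 : ℝ) else 0) * f k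
      = (f ⟨0, by omega⟩ + f ⟨1, by omega⟩) / 2 := by
  obtain ⟨n, rfl⟩ := Nat.exists_eq_add_of_le' hK
  rw [Fin.sum_univ_succ, Fin.sum_univ_succ]
  have h : (Fin.succ 0 : Fin (n + 2)) = ⟨1, by omega⟩ := rfl
  simp [h]
  ring

/-- Squared distance from `(1, 1 - ε)` to the half-space of an arm `(a, b)` on the unit circle
with negative coordinates: it is at least `1/2`. -/
theorem half_le_sq_dist {a b ε x y : ℝ} (hε : ε < 1) (ha : a < 0) (hb : b < 0)
    (hab : a ^ 2 + b ^ 2 = 1) (h : x ≤ x * a + y * b) :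
    1 / 2 ≤ (1 - x) ^ 2 + (1 - ε - y) ^ 2 := by
  have hq : 0 < (-b) * (1 - ε) := mul_pos (by linarith) (by linarith)
  have h1 : 1 - a ≤ (1 - a) * (1 - x) + (-b) * (1 - ε - y) := by nlinarith
  have h2 : (1 - a) ^ 2 ≤ ((1 - a) * (1 - x) + (-b) * (1 - ε - y)) ^ 2 :=
    pow_le_pow_left₀ (by linarith) h1 2
  -- Cauchy–Schwarz, with the defect written as a square.
  have h3 : ((1 - a) * (1 - x) + (-b) * (1 - ε - y)) ^ 2
      ≤ ((1 - a) ^ 2 + b ^ 2) * ((1 - x) ^ 2 + (1 - ε - y) ^ 2) := by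
    nlinarith [sq_nonneg ((1 - a) * (1 - ε - y) + b * (1 - x))]
  have h4 : (1 - a) ^ 2 + b ^ 2 = (1 - a) * 2 := by linarith
  rw [h4] at h3
  have h5 : (1 - a) * (1 - a) ≤ (1 - a) * (2 * ((1 - x) ^ 2 + (1 - ε - y) ^ 2)) := by
    linarith
  have h6 := le_of_mul_le_mul_left h5 (by linarith)
  linarith

/-- On the example instance, the optimal value of the lower-bound game is `ε²/8`: the
allocation `ω* = (1/2, 1/2, 0, …, 0)` achieves `min_{k≥2} H_k(ω*,θ) = ε²/8`, and every
simplex allocation `ω` satisfies `min_{k≥2} H_k(ω,θ) ≤ ε²/8`; in particular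
`max_ω min_k H_k(ω,θ) = ε²/8`, attained at `ω*`.
(Arms are 0-indexed: arm 1 ↦ index 0, arm 2 ↦ index 1, arms 3,…,K ↦ indices 2,…,K−1.) -/
theorem example_instance_optimal_value
    (K : ℕ) (hK : 3 ≤ K) (ε : ℝ) (hε0 : 0 < ε) (hε : ε < 1 / 2)
    (φ : Fin K → Fin 2 → ℝ)
    (hφ0 : φ ⟨0, by omega⟩ = ![1, 0])
    (hφ1 : φ ⟨1, by omega⟩ = ![0, 1])
    (hφk : ∀ k : Fin K, 2 ≤ (k : ℕ) →
      φ k 0 ∈ Set.Ioo (-1 : ℝ) 0 ∧ φ k 1 ∈ Set.Ioo (-1 : ℝ) 0 ∧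
        (φ k 0) ^ 2 + (φ k 1) ^ 2 = 1)
    (θ : Fin 2 → ℝ) (hθ : θ = ![1, 1 - ε])
    (ωstar : Fin K → ℝ) (hωstar : ωstar = fun k : Fin K => if (k : ℕ) ≤ 1 then (1 / 2 : ℝ) else 0) :
    sInf ((fun k => Hinfo φ θ ωstar k ⟨0, by omega⟩) '' {k : Fin K | 1 ≤ (k : ℕ)})
        = ε ^ 2 / 8
    ∧ ∀ ω : Fin K → ℝ, (∀ k, 0 ≤ ω k) → ∑ k : Fin K, ω k = 1 →
        sInf ((fun k => Hinfo φ θ ω k ⟨0, by omega⟩) '' {k : Fin K | 1 ≤ (k : ℕ)})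
          ≤ ε ^ 2 / 8 := by
  have upper : ∀ ω : Fin K → ℝ, (∀ k, 0 ≤ ω k) → ∑ k : Fin K, ω k = 1 →
      sInf ((fun k => Hinfo φ θ ω k ⟨0, by omega⟩) '' {k : Fin K | 1 ≤ (k : ℕ)})
        ≤ ε ^ 2 / 8 := by
    intro ω hω hsum
    have hmin : sInf ((fun k => Hinfo φ θ ω k ⟨0, by omega⟩) '' {k : Fin K | 1 ≤ (k : ℕ)})
        ≤ Hinfo φ θ ω ⟨1, by omega⟩ ⟨0, by omega⟩ := by
      refine csInf_le ⟨0, ?_⟩ ⟨⟨1, by omega⟩, le_refl 1, rfl⟩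
      rintro _ ⟨k, -, rfl⟩
      exact Hinfo_nonneg φ θ hω _ _
    refine hmin.trans ((Hinfo_le φ θ hω _ _ ![1 - ε / 2, 1 - ε / 2] ?_).trans ?_)
    · rw [hφ0, hφ1]
      simp [dotProduct, Fin.sum_univ_two]
    · have hx : ∀ k, (φ k ⬝ᵥ (θ - ![1 - ε / 2, 1 - ε / 2])) ^ 2
          = (ε / 2) ^ 2 * (φ k 0 - φ k 1) ^ 2 := by
        intro k
        simp [hθ, dotProduct, Fin.sum_univ_two]
        ring
      have hbound : ∀ k, (φ k 0 - φ k 1) ^ 2 ≤ 1 := by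
        rintro ⟨k, hk⟩
        rcases k with _ | _ | k
        · rw [hφ0]; norm_num
        · rw [show φ ⟨0 + 1, hk⟩ = ![0, 1] from hφ1]; norm_num
        · obtain ⟨⟨h1, h2⟩, ⟨h3, h4⟩, -⟩ := hφk ⟨k + 1 + 1, hk⟩ (by simp)
          rw [sq_le_one_iff_abs_le_one, abs_le]
          constructor <;> linarith
      have hle : ∑ k, ω k * (φ k ⬝ᵥ (θ - ![1 - ε / 2, 1 - ε / 2])) ^ 2
          ≤ ∑ k, ω k * (ε / 2) ^ 2 := by
        refine Finset.sum_le_sum fun k _ => mul_le_mul_of_nonneg_left ?_ (hω k)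
        rw [hx]
        exact mul_le_of_le_one_right (sq_nonneg _) (hbound k)
      rw [← Finset.sum_mul, hsum] at hle
      rw [quadForm_eq]
      linarith
  refine ⟨le_antisymm (upper ωstar ?_ ?_) ?_, upper⟩
  · intro k
    rw [hωstar]
    dsimp only
    split_ifs <;> norm_num
  · have h := sum_half_mul K (by omega) fun _ => 1
    simp only [mul_one] at h
    rw [hωstar, h]
    norm_num
  · refine le_csInf ⟨_, ⟨1, by omega⟩, le_refl 1, rfl⟩ ?_
    rintro _ ⟨k, hk, rfl⟩
    apply le_Hinfo
    intro l hl
    rw [quadForm_eq, hωstar, sum_half_mul K (by omega), hφ0, hφ1]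
    rw [hφ0] at hl
    simp only [hθ, dotProduct, Fin.sum_univ_two, Pi.sub_apply, Matrix.cons_val_zero,
      Matrix.cons_val_one] at hl ⊢
    rcases (show 1 ≤ (k : ℕ) from hk).eq_or_lt with h1 | h2
    · have hk1 : k = ⟨1, by omega⟩ := Fin.ext h1.symm
      rw [hk1, hφ1] at hl
      simp at hl
      have hgap : ε ≤ (1 - l 0) - (1 - ε - l 1) := by linarith
      nlinarith [sq_nonneg ((1 - l 0) + (1 - ε - l 1)), pow_le_pow_left₀ hε0.le hgap 2]
    · obtain ⟨⟨-, ha⟩, ⟨-, hb⟩, hab⟩ := hφk k h2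
      have := half_le_sq_dist (x := l 0) (y := l 1) (ε := ε) (by linarith) ha hb hab
        (by linarith)
      nlinarith
end

section
/- Fix an integer K ≥ 3 and ε ∈ (0,1/2). In ℝ², let φ_1 = (1,0)ᵀ, φ_2 = (0,1)ᵀ, and for each k = 3,…,K let φ_k = (a_k, b_k)ᵀ with a_k, b_k ∈ (−1,0) and a_k² + b_k² = 1. Let θ = (1, 1−ε)ᵀ. For ω in the simplex Δ_K = {ω ∈ ℝ^K : ω_k ≥ 0, Σ_k ω_k = 1}, let V_ω = Σ_{k=1}^K ω_k φ_k φ_kᵀ and, for k = 2,…,K, H_k(ω,θ) = inf{ ½ (θ−λ)ᵀ V_ω (θ−λ) : λ ∈ ℝ², λᵀφ_k ≥ λᵀφ_1 }. Let ω* = (1/2, 1/2, 0, …, 0)ᵀ ∈ Δ_K. Then for every k ∈ {3,…,K}: H_k(ω*,θ) ≥ (1−ε)²/8 ≥ 1/32. -/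
/-!
Under `ω* = (1/2, 1/2, 0, …, 0)` the quadratic form of the design matrix is half the squared
Euclidean norm (`dotProduct_designMatrix_mulVec`). If `λ` prefers arm `k` to arm `1`, then
`(1 - a_k) λ₁ ≤ b_k λ₂` with `a_k, b_k < 0`, so `λ₁` and `λ₂` cannot both be positive. Since both
coordinates of `θ` are at least `1 - ε > 0`, one coordinate of `θ - λ` is at least `1 - ε`, and the
objective is at least `(1 - ε)² / 4`.
-/

open Matrix BigOperators

theorem dotProduct_designMatrix_mulVec {K : ℕ} (φ : Fin K → Fin 2 → ℝ) (ω : Fin K → ℝ)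
    (v : Fin 2 → ℝ) :
    v ⬝ᵥ (designMatrix φ ω).mulVec v = ∑ k, ω k * (φ k ⬝ᵥ v) ^ 2 := by
  unfold designMatrix
  rw [Matrix.sum_mulVec, dotProduct_sum]
  refine Finset.sum_congr rfl fun k _ => ?_
  simp [Matrix.mulVec, Matrix.vecMulVec, dotProduct, Fin.sum_univ_two]
  ring

/-- On the example instance, under the optimal allocation `ω* = (1/2, 1/2, 0, …, 0)`,
every arm `k ≥ 3` has information `H_k(ω*,θ) ≥ (1−ε)²/8 ≥ 1/32`.
(Arms are 0-indexed: arm 1 ↦ index 0, arm 2 ↦ index 1, arms 3,…,K ↦ indices 2,…,K−1.) -/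
theorem example_instance_easy_arms_oracle
    (K : ℕ) (hK : 3 ≤ K) (ε : ℝ) (hε0 : 0 < ε) (hε : ε < 1 / 2)
    (φ : Fin K → Fin 2 → ℝ)
    (hφ0 : φ ⟨0, by omega⟩ = ![1, 0])
    (hφ1 : φ ⟨1, by omega⟩ = ![0, 1])
    (hφk : ∀ k : Fin K, 2 ≤ (k : ℕ) →
      φ k 0 ∈ Set.Ioo (-1 : ℝ) 0 ∧ φ k 1 ∈ Set.Ioo (-1 : ℝ) 0 ∧
        (φ k 0) ^ 2 + (φ k 1) ^ 2 = 1)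
    (θ : Fin 2 → ℝ) (hθ : θ = ![1, 1 - ε])
    (ωstar : Fin K → ℝ)
    (hωstar : ωstar = fun k : Fin K => if (k : ℕ) ≤ 1 then (1 / 2 : ℝ) else 0)
    (k : Fin K) (hk : 2 ≤ (k : ℕ)) :
    Hinfo φ θ ωstar k ⟨0, by omega⟩ ≥ (1 - ε) ^ 2 / 8
    ∧ (1 - ε) ^ 2 / 8 ≥ (1 : ℝ) / 32 := by
  refine ⟨?_, by nlinarith⟩
  have hform : ∀ v : Fin 2 → ℝ,
      v ⬝ᵥ (designMatrix φ ωstar).mulVec v = 1 / 2 * (v 0 ^ 2 + v 1 ^ 2) := by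
    intro v
    obtain ⟨n, rfl⟩ : ∃ n, K = n + 2 := ⟨K - 2, by omega⟩
    have h0 : φ 0 = ![1, 0] := hφ0
    have h1 : φ 1 = ![0, 1] := hφ1
    rw [dotProduct_designMatrix_mulVec, hωstar, Fin.sum_univ_succ, Fin.sum_univ_succ]
    simp [h0, h1, dotProduct, Fin.sum_univ_two]
    ring
  obtain ⟨⟨_, ha⟩, ⟨_, hb⟩, _⟩ := hφk k hk
  -- `λ = 0` lies in the half-space, so the infimum is not the junk value `sInf ∅`.
  refine le_csInf (Set.Nonempty.image _ ⟨0, by simp⟩) ?_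
  rintro _ ⟨lam, hlam, rfl⟩
  simp only [Set.mem_ofPred_eq, hφ0, dotProduct, Fin.sum_univ_two, Matrix.cons_val_zero,
    Matrix.cons_val_one, mul_one, mul_zero, add_zero] at hlam
  simp only [hform, hθ, Pi.sub_apply, Matrix.cons_val_zero, Matrix.cons_val_one]
  rcases le_or_gt (lam 0) 0 with hx | hx
  · nlinarith [sq_nonneg (1 - ε - lam 1), sq_nonneg (lam 0)]
  · have hy : lam 1 ≤ 0 := by
      by_contra! hy
      nlinarith [mul_pos hx (neg_pos.2 ha), mul_pos hy (neg_pos.2 hb)]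
    nlinarith [sq_nonneg (1 - lam 0), sq_nonneg (lam 1), sq_nonneg (1 - ε),
      mul_nonneg (neg_nonneg.2 hy) (by linarith : (0 : ℝ) ≤ 1 - ε)]
end
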